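/- The number of left-aligned rook placements on 2δ_n having exactly n-2k blocks with exactly one rook equals the number of permutations of {1,...,n+1} with exactly k descents such that every descent is a peak. -/

import Mathlib

/-- Rook placements on the double staircase `2δ_n`: one rook per row (row `i`,
numbered from the top starting at `0`, has `2*(i+1)` cells), at most one rook
per column. -/
def RookPlacement (n : ℕ) :=
  {r : Fin n → Fin (2 * n) //
    Function.Injective r ∧ ∀ i : Fin n, (r i : ℕ) < 2 * (i.val + 1)}

/-- Column `c` (0-indexed) of the rook placement `R` contains a rook. -/
def Occupied {n : ℕ} (R : RookPlacement n) (c : ℕ) : Prop :=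
  ∃ j : Fin n, (R.1 j : ℕ) = c

/-- The number of rooks in block `i` of `R` (block `i` consists of the two
columns `2i` and `2i+1`, 0-indexed). -/
def blockRooks {n : ℕ} (R : RookPlacement n) (i : Fin n) : ℕ :=
  (Finset.univ.filter (fun j : Fin n => (R.1 j : ℕ) / 2 = i.val)).card

/-- `R` is left-aligned: no block has a rook in its right column without a rook
in its left column. -/
def LeftAligned {n : ℕ} (R : RookPlacement n) : Prop :=
  ∀ i : Fin n, Occupied R (2 * i.val + 1) → Occupied R (2 * i.val)

/-- `R` is right-aligned: no block has a rook in its left column without a rook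
in its right column. -/
def RightAligned {n : ℕ} (R : RookPlacement n) : Prop :=
  ∀ i : Fin n, Occupied R (2 * i.val) → Occupied R (2 * i.val + 1)

/-- `bor R` is the number of blocks of `R` containing exactly one rook. -/
def bor {n : ℕ} (R : RookPlacement n) : ℕ :=
  (Finset.univ.filter (fun i : Fin n => blockRooks R i = 1)).card

/-- The one-line word of a permutation of `{1, …, m}` extended by the boundary
convention `σ_0 = σ_{m+1} = ⋯ = 0`: `permWord σ i = σ_i` for `1 ≤ i ≤ m`
(values in `{1, …, m}`) and `0` otherwise. -/
def permWord {m : ℕ} (σ : Equiv.Perm (Fin m)) : ℕ → ℕ := fun i =>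
  if h : 1 ≤ i ∧ i ≤ m then (σ ⟨i - 1, by omega⟩).val + 1 else 0

/-- The number of descents of `σ ∈ S_{m}`: positions `1 ≤ i ≤ m - 1` with
`σ_i > σ_{i+1}`. -/
def desCount {m : ℕ} (σ : Equiv.Perm (Fin m)) : ℕ :=
  ((Finset.Icc 1 (m - 1)).filter (fun i => permWord σ (i + 1) < permWord σ i)).card

/-- The number of ascents of `σ ∈ S_{m}`: positions `1 ≤ i ≤ m - 1` with
`σ_i < σ_{i+1}`. -/
def ascCount {m : ℕ} (σ : Equiv.Perm (Fin m)) : ℕ :=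
  ((Finset.Icc 1 (m - 1)).filter (fun i => permWord σ i < permWord σ (i + 1))).card

/-- `σ ∈ S_m` has no double falls: no position `1 ≤ i ≤ m` with
`σ_{i-1} > σ_i > σ_{i+1}` (with the convention `σ_0 = σ_{m+1} = 0`).
Equivalently, every descent of `σ` is a peak. -/
def NoDoubleFall {m : ℕ} (σ : Equiv.Perm (Fin m)) : Prop :=
  ∀ i ∈ Finset.Icc 1 m,
    ¬ (permWord σ i < permWord σ (i - 1) ∧ permWord σ (i + 1) < permWord σ i)

/-- `σ ∈ S_m` has no double rises: no position `1 ≤ i ≤ m` with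
`σ_{i-1} < σ_i < σ_{i+1}` (with the convention `σ_0 = σ_{m+1} = 0`).
Equivalently, every ascent of `σ` is a valley. -/
def NoDoubleRise {m : ℕ} (σ : Equiv.Perm (Fin m)) : Prop :=
  ∀ i ∈ Finset.Icc 1 m,
    ¬ (permWord σ (i - 1) < permWord σ i ∧ permWord σ i < permWord σ (i + 1))

/-!
Give each block of a rook placement two slots, its columns, and each letter of a permutation two
slots, its sides; a column is filled when it holds a rook, a side when the neighbour on that side is
larger. Both families then grow by the same rule: fill a free slot and create an element with no
filled slot. For rook placements the filled slot is the column of the rook in a new bottom row, and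
the new element is the block to the right of the diagram. For permutations one inserts a new maximum
in a gap: the larger end of the gap acquires a larger neighbour, the smaller end already had one,
and every gap has exactly one larger end, so gaps correspond to free sides. Iterating the rule gives
a bijection between placements and permutations that matches blocks with letters, slot by slot, and
the statistics in question are read off from the slots.
-/

section Slots

variable {ι κ S : Type*} {m : ℕ}

/-- The unfilled slots of a configuration in which the element `i : ι` has the set `o i` of filled
slots. -/
abbrev FreeSlot (o : ι → Set S) : Type _ :=
  {x : ι × S // x.2 ∉ o x.1}

/-- The configuration obtained from `o` by filling the slot `x`. -/
def fillSlot (o : ι → Set S) (x : ι × S) : ι → Set S :=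
  fun i => {s | s ∈ o i ∨ (i, s) = x}

/-- The correspondence of free slots induced by a slot-preserving relabelling of the elements. -/
def freeSlotEquiv {o : ι → Set S} {o' : κ → Set S} (e : ι ≃ κ) (h : o = o' ∘ e) :
    FreeSlot o ≃ FreeSlot o' :=
  (e.prodCongr (Equiv.refl S)).subtypeEquiv fun x => by simp [h]

theorem fillSlot_eq_comp {o : ι → Set S} {o' : κ → Set S} (e : ι ≃ κ) (h : o = o' ∘ e)
    (x : FreeSlot o) : fillSlot o x.1 = fillSlot o' (freeSlotEquiv e h x).1 ∘ e := by
  subst h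
  ext i s
  simp [fillSlot, freeSlotEquiv, Prod.ext_iff]

/-- The extension of `e` by `p ↦ q`, all other elements keeping their relative labels. -/
def insertPoint (p q : Fin (m + 1)) (e : Equiv.Perm (Fin m)) : Equiv.Perm (Fin (m + 1)) :=
  ((finSuccEquiv' p).trans (Equiv.optionCongr e)).trans (finSuccEquiv' q).symm

theorem insertPoint_self (p q : Fin (m + 1)) (e : Equiv.Perm (Fin m)) :
    insertPoint p q e p = q := by
  simp [insertPoint]

theorem insertPoint_succAbove (p q : Fin (m + 1)) (e : Equiv.Perm (Fin m)) (i : Fin m) :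
    insertPoint p q e (p.succAbove i) = q.succAbove (e i) := by
  simp [insertPoint]

theorem insertNth_comp_insertPoint {α : Type*} (p q : Fin (m + 1)) (e : Equiv.Perm (Fin m)) (a : α)
    (f : Fin m → α) :
    q.insertNth (α := fun _ => α) a f ∘ insertPoint p q e =
      p.insertNth (α := fun _ => α) a (f ∘ e) := by
  funext i
  cases i using p.succAboveCases <;> simp [insertPoint_self, insertPoint_succAbove]

/-- Families `A n` of objects with `n + 1` elements, each element carrying slots indexed by `S`,
which start from a single object without filled slots and grow by filling one free slot and
inserting one element without filled slots. -/
structure SlotGrowth (A : ℕ → Type*) (slots : ∀ {n}, A n → Fin (n + 1) → Set S) where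
  unique_zero : Unique (A 0)
  slots_zero : ∀ a : A 0, slots a = fun _ => ∅
  grow : ∀ n, (Σ a : A n, FreeSlot (slots a)) ≃ A (n + 1)
  slots_grow : ∀ n x, ∃ p : Fin (n + 2),
    slots (grow n x) = p.insertNth (α := fun _ => Set S) ∅ (fillSlot (slots x.1) x.2.1)

theorem SlotGrowth.exists_equiv {A B : ℕ → Type*} {slotsA : ∀ {n}, A n → Fin (n + 1) → Set S}
    {slotsB : ∀ {n}, B n → Fin (n + 1) → Set S} (hA : SlotGrowth A slotsA)
    (hB : SlotGrowth B slotsB) (n : ℕ) :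
    ∃ Φ : A n ≃ B n, ∀ a, ∃ e : Equiv.Perm (Fin (n + 1)), slotsA a = slotsB (Φ a) ∘ e := by
  induction n with
  | zero =>
    let _ := hA.unique_zero
    let _ := hB.unique_zero
    exact ⟨Equiv.ofUnique _ _, fun a => ⟨1, by rw [hA.slots_zero, hB.slots_zero]; rfl⟩⟩
  | succ n ih =>
    obtain ⟨Φ, hΦ⟩ := ih
    choose e he using hΦ
    let Ψ : (Σ a, FreeSlot (slotsA (n := n) a)) ≃ Σ b, FreeSlot (slotsB (n := n) b) :=
      Φ.sigmaCongr fun a => freeSlotEquiv (e a) (he a)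
    refine ⟨(hA.grow n).symm.trans (Ψ.trans (hB.grow n)), fun a' => ?_⟩
    obtain ⟨⟨a, x⟩, rfl⟩ := (hA.grow n).surjective a'
    obtain ⟨p, hp⟩ := hA.slots_grow n ⟨a, x⟩
    obtain ⟨q, hq⟩ := hB.slots_grow n (Ψ ⟨a, x⟩)
    refine ⟨insertPoint p q (e a), ?_⟩
    simp only [Equiv.trans_apply, Equiv.symm_apply_apply]
    rw [hp, hq, insertNth_comp_insertPoint]
    exact congrArg _ (fillSlot_eq_comp (e a) (he a) x)

end Slots

section RookPlacements

variable {n : ℕ}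

/-- The slots of block `i` of `R`: `0` is its left column, `1` its right column. The block `n` just
outside the diagram is included. -/
def filledColumns (R : RookPlacement n) (i : Fin (n + 1)) : Set (Fin 2) :=
  {s | Occupied R (2 * i + s)}

theorem not_occupied_of_le (R : RookPlacement n) {c : ℕ} (hc : 2 * n ≤ c) : ¬Occupied R c := by
  rintro ⟨j, rfl⟩
  omega

theorem filledColumns_last (R : RookPlacement n) : filledColumns R (Fin.last n) = ∅ :=
  Set.eq_empty_of_forall_notMem fun _ => not_occupied_of_le R (Nat.le_add_right _ _)

/-- Extend a placement by a rook in the free column `c` of a new bottom row. -/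
def addRow (R : RookPlacement n) (c : Fin (2 * (n + 1))) (hc : ¬Occupied R c) :
    RookPlacement (n + 1) :=
  ⟨Fin.snoc (α := fun _ => Fin (2 * (n + 1))) (fun j => Fin.castLE (by omega) (R.1 j)) c, by
    refine ⟨Fin.snoc_injective_iff.2 ⟨fun i j h => R.2.1 (by simpa [Fin.ext_iff] using h), ?_⟩,
      fun i => ?_⟩
    · rintro ⟨j, hj⟩
      exact hc ⟨j, by simpa [Fin.ext_iff] using hj⟩
    · induction i using Fin.lastCases with
      | last => simp
      | cast i => simpa using R.2.2 i⟩

/-- Delete the bottom row. -/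
def removeRow (R : RookPlacement (n + 1)) : RookPlacement n :=
  ⟨fun j => ⟨R.1 j.castSucc, (R.2.2 j.castSucc).trans_le (by simp only [Fin.val_castSucc]; omega)⟩,
    fun i j h => Fin.castSucc_injective n (R.2.1 (Fin.ext (by simpa using h))),
    fun i => R.2.2 i.castSucc⟩

theorem occupied_addRow (R : RookPlacement n) (c : Fin (2 * (n + 1))) (hc : ¬Occupied R c)
    (d : ℕ) : Occupied (addRow R c hc) d ↔ Occupied R d ∨ d = c := by
  simp [Occupied, addRow, Fin.exists_fin_succ', eq_comm (a := d)]

/-- A placement is a placement in the rows above the bottom one together with a free column. -/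
def rowEquiv (n : ℕ) :
    (Σ R : RookPlacement n, {c : Fin (2 * (n + 1)) // ¬Occupied R c}) ≃ RookPlacement (n + 1) where
  toFun x := addRow x.1 x.2.1 x.2.2
  invFun R := ⟨removeRow R, R.1 (Fin.last n), fun ⟨j, h⟩ =>
    (Fin.castSucc_lt_last j).ne (R.2.1 (Fin.ext h))⟩
  left_inv := by
    rintro ⟨R, c, hc⟩
    have hR : removeRow (addRow R c hc) = R := Subtype.ext (by funext j; simp [removeRow, addRow])
    exact Sigma.subtype_ext hR (by simp [addRow])
  right_inv R := by
    apply Subtype.ext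
    funext i
    induction i using Fin.lastCases <;> simp [addRow, removeRow]

/-- The column `2 * i + s` of the slot `(i, s)`. -/
def slotColumn (n : ℕ) : Fin (n + 1) × Fin 2 ≃ Fin (2 * (n + 1)) :=
  finProdFinEquiv.trans (finCongr (mul_comm _ _))

theorem val_slotColumn (x : Fin (n + 1) × Fin 2) : (slotColumn n x : ℕ) = 2 * x.1 + x.2 := by
  simp [slotColumn, add_comm]

/-- The free slots of a placement are the columns available to a rook in a new bottom row. -/
def freeColumnEquiv (R : RookPlacement n) :
    FreeSlot (filledColumns R) ≃ {c : Fin (2 * (n + 1)) // ¬Occupied R c} :=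
  (slotColumn n).subtypeEquiv fun x => by rw [val_slotColumn]; rfl

theorem filledColumns_addRow (R : RookPlacement n) (x : Fin (n + 1) × Fin 2)
    (hx : ¬Occupied R (slotColumn n x)) :
    filledColumns (addRow R (slotColumn n x) hx) =
      (Fin.last (n + 1)).insertNth (α := fun _ => Set (Fin 2)) ∅
        (fillSlot (filledColumns R) x) := by
  rw [Fin.eq_insertNth_iff]
  refine ⟨filledColumns_last _, funext fun i => Set.ext fun s => ?_⟩
  have hcol : 2 * (i : ℕ) + s = slotColumn n x ↔ (i, s) = x := by
    rw [← val_slotColumn (i, s), Fin.val_inj, (slotColumn n).apply_eq_iff_eq]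
  simp only [Fin.removeNth, Fin.succAbove_last, filledColumns, fillSlot, Set.mem_ofPred_eq,
    occupied_addRow, Fin.val_castSucc, hcol]

/-- Rook placements grow by one row at a time. -/
def rookGrowth : SlotGrowth RookPlacement filledColumns where
  unique_zero :=
    ⟨⟨⟨Fin.elim0, fun i => i.elim0, fun i => i.elim0⟩⟩, fun _ => Subtype.ext (funext (·.elim0))⟩
  slots_zero R := funext fun i => by rw [Fin.fin_one_eq_zero i]; exact filledColumns_last R
  grow n := (Equiv.sigmaCongrRight freeColumnEquiv).trans (rowEquiv n)
  slots_grow _ x := ⟨Fin.last _, filledColumns_addRow x.1 x.2.1 (freeColumnEquiv x.1 x.2).2⟩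

theorem leftAligned_iff (R : RookPlacement n) :
    LeftAligned R ↔ ∀ i, 1 ∈ filledColumns R i → 0 ∈ filledColumns R i := by
  rw [Fin.forall_fin_succ', filledColumns_last]
  simp [LeftAligned, filledColumns]

theorem blockRooks_eq_ncard (R : RookPlacement n) (i : Fin n) :
    blockRooks R i = (filledColumns R i.castSucc).ncard := by
  have hinj : Set.InjOn (fun j => Fin.ofNat 2 (R.1 j)) {j | (R.1 j : ℕ) / 2 = i} := by
    intro j hj k hk h
    simp only [Set.mem_ofPred_eq, Fin.ofNat, Fin.mk.injEq] at hj hk h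
    exact R.2.1 (Fin.ext (by omega))
  have himage : (fun j => Fin.ofNat 2 (R.1 j)) '' {j | (R.1 j : ℕ) / 2 = i} =
      filledColumns R i.castSucc := by
    ext s
    simp only [filledColumns, Occupied, Set.mem_image, Set.mem_ofPred_eq, Fin.ofNat, Fin.ext_iff,
      Fin.val_castSucc]
    exact exists_congr fun j => by omega
  rw [← himage, hinj.ncard_image, Set.ncard_eq_toFinset_card', blockRooks, Set.toFinset_ofPred]

theorem sum_blockRooks (R : RookPlacement n) : ∑ i, blockRooks R i = n := by
  let block : Fin n → Fin n := fun j => ⟨(R.1 j : ℕ) / 2, by omega⟩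
  simpa [block, Fin.ext_iff, blockRooks] using
    (Finset.card_eq_sum_card_fiberwise (f := block) (s := Finset.univ) (t := Finset.univ)
      (by simp)).symm

open scoped Classical in
theorem LeftAligned.blockRooks_eq {R : RookPlacement n} (hR : LeftAligned R) (i : Fin n) :
    blockRooks R i = (if blockRooks R i = 1 then 1 else 0) +
      2 * if 1 ∈ filledColumns R i.castSucc then 1 else 0 := by
  rw [blockRooks_eq_ncard]
  by_cases hright : 1 ∈ filledColumns R i.castSucc
  · have hfull : filledColumns R i.castSucc = Set.univ :=
      Set.eq_univ_of_forall (Fin.forall_fin_two.2 ⟨(leftAligned_iff R).1 hR _ hright, hright⟩)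
    simp [hfull, Set.ncard_univ]
  · have hle : (filledColumns R i.castSucc).ncard ≤ 1 := by
      rw [← Set.ncard_singleton (0 : Fin 2)]
      exact Set.ncard_le_ncard (Fin.forall_fin_two.2 ⟨fun _ => rfl, fun h => (hright h).elim⟩)
    rw [if_neg hright]
    split_ifs <;> omega

open scoped Classical in
theorem LeftAligned.bor_add_two_mul {R : RookPlacement n} (hR : LeftAligned R) :
    bor R + 2 * Finset.card {i | 1 ∈ filledColumns R i} = n := by
  have hlast : 1 ∉ filledColumns R (Fin.last n) := by simp [filledColumns_last]
  rw [bor, Finset.card_filter, Finset.card_filter, Fin.sum_univ_castSucc, if_neg hlast, add_zero,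
    Finset.mul_sum, ← Finset.sum_add_distrib]
  exact (Finset.sum_congr rfl fun i _ => (hR.blockRooks_eq i).symm).trans (sum_blockRooks R)

end RookPlacements

section Permutations

variable {m n : ℕ}

theorem permWord_zero (σ : Equiv.Perm (Fin m)) : permWord σ 0 = 0 := rfl

theorem permWord_of_gt (σ : Equiv.Perm (Fin m)) {i : ℕ} (hi : m < i) : permWord σ i = 0 :=
  dif_neg (by omega)

theorem permWord_succ (σ : Equiv.Perm (Fin m)) (i : Fin m) : permWord σ (i + 1) = σ i + 1 := by
  simp [permWord]

theorem permWord_le (σ : Equiv.Perm (Fin m)) (i : ℕ) : permWord σ i ≤ m := by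
  unfold permWord
  split_ifs <;> omega

theorem permWord_succ_ne (σ : Equiv.Perm (Fin m)) (i : Fin m) {j : ℕ} (hj : j ≠ i + 1) :
    permWord σ (i + 1) ≠ permWord σ j := by
  rw [permWord_succ, permWord]
  split_ifs with h
  · simp only [ne_eq, Nat.add_right_cancel_iff, Fin.val_inj, σ.apply_eq_iff_eq, Fin.ext_iff]
    omega
  · omega

/-- Insert the new maximum in gap `p` of the one-line word of `τ`, gap `p` being the place between
`τ_p` and `τ_{p+1}`. -/
def insertMax (τ : Equiv.Perm (Fin m)) (p : Fin (m + 1)) : Equiv.Perm (Fin (m + 1)) :=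
  insertPoint p (Fin.last m) τ

theorem insertMax_bijective (m : ℕ) :
    Function.Bijective fun x : Equiv.Perm (Fin m) × Fin (m + 1) => insertMax x.1 x.2 := by
  rw [Fintype.bijective_iff_injective_and_card]
  refine ⟨fun ⟨τ, p⟩ ⟨τ', p'⟩ h => ?_, by simp [Fintype.card_perm, Nat.factorial_succ, mul_comm]⟩
  replace h : insertMax τ p = insertMax τ' p' := h
  obtain rfl : p = p' := (insertMax τ' p').injective <| by
    rw [← h]
    exact (insertPoint_self ..).trans (h ▸ (insertPoint_self ..).symm)
  have hτ : τ = τ' := Equiv.ext fun i => Fin.succAbove_right_injective (p := Fin.last m) <| by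
    rw [← insertPoint_succAbove p, ← insertPoint_succAbove p]
    exact congrArg (· (p.succAbove i)) h
  rw [hτ]

theorem permWord_insertMax_self (τ : Equiv.Perm (Fin m)) (p : Fin (m + 1)) :
    permWord (insertMax τ p) (p + 1) = m + 1 := by
  rw [permWord_succ, insertMax, insertPoint_self, Fin.val_last]

theorem permWord_insertMax_succAbove (τ : Equiv.Perm (Fin m)) (p : Fin (m + 1)) (i : Fin m) :
    permWord (insertMax τ p) (p.succAbove i + 1) = permWord τ (i + 1) := by
  rw [permWord_succ, permWord_succ, insertMax, insertPoint_succAbove, Fin.succAbove_last,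
    Fin.val_castSucc]

theorem permWord_insertMax_of_le (τ : Equiv.Perm (Fin m)) (p : Fin (m + 1)) {i : ℕ} (hi : i ≤ p) :
    permWord (insertMax τ p) i = permWord τ i := by
  obtain _ | i := i
  · rfl
  · have h := permWord_insertMax_succAbove τ p ⟨i, by omega⟩
    rwa [Fin.succAbove_of_castSucc_lt _ _ (by simpa [Fin.lt_def])] at h

theorem permWord_insertMax_of_gt (τ : Equiv.Perm (Fin m)) (p : Fin (m + 1)) {i : ℕ}
    (hi : p < i) : permWord (insertMax τ p) (i + 1) = permWord τ i := by
  obtain _ | i := i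
  · omega
  rcases lt_or_ge i m with him | him
  · have h := permWord_insertMax_succAbove τ p ⟨i, him⟩
    rwa [Fin.succAbove_of_le_castSucc _ _ (by simp only [Fin.le_def, Fin.val_castSucc]; omega)] at h
  · rw [permWord_of_gt _ (by omega), permWord_of_gt _ (by omega)]

theorem permWord_insertMax_right (τ : Equiv.Perm (Fin m)) (p : Fin (m + 1)) (j : Fin m) :
    permWord (insertMax τ p) (p.succAbove j + 2) =
      if j.succ = p then m + 1 else permWord τ (j + 2) := by
  split_ifs with h
  · subst h
    rw [Fin.succAbove_succ_self]
    exact permWord_insertMax_self τ j.succ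
  · rcases lt_or_ge j.castSucc p with hj | hj
    · rw [Fin.succAbove_of_castSucc_lt _ _ hj]
      exact permWord_insertMax_of_le τ p ((Fin.castSucc_lt_iff_succ_le.1 hj).lt_of_ne h)
    · rw [Fin.succAbove_of_le_castSucc _ _ hj]
      rw [Fin.le_def, Fin.val_castSucc] at hj
      exact permWord_insertMax_of_gt τ p (i := j + 2) (by omega)

theorem permWord_insertMax_left (τ : Equiv.Perm (Fin m)) (p : Fin (m + 1)) (j : Fin m) :
    permWord (insertMax τ p) (p.succAbove j) =
      if j.castSucc = p then m + 1 else permWord τ j := by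
  split_ifs with h
  · subst h
    rw [Fin.succAbove_castSucc_self]
    exact permWord_insertMax_self τ j.castSucc
  · rcases lt_or_ge j.castSucc p with hj | hj
    · rw [Fin.succAbove_of_castSucc_lt _ _ hj]
      exact permWord_insertMax_of_le τ p hj.le
    · rw [Fin.succAbove_of_le_castSucc _ _ hj]
      exact permWord_insertMax_of_gt τ p (hj.lt_of_ne' h)

/-- The slots of the letter `σ_{i+1}`: the sides on which it has a larger neighbour. Side `0` is the
right one and side `1` the left one, so that the double falls are the letters whose only filled slot
is `1`, like the blocks that violate left-alignment. -/
def largerSides (σ : Equiv.Perm (Fin m)) (i : Fin m) : Set (Fin 2) :=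
  {s | permWord σ (i + 1) < permWord σ (![(i : ℕ) + 2, i] s)}

/-- The gap on side `x.2` of the letter at index `x.1`, numbered as in `insertMax`. -/
def gap (x : Fin m × Fin 2) : Fin (m + 1) :=
  ![x.1.succ, x.1.castSucc] x.2

theorem zero_mem_largerSides (σ : Equiv.Perm (Fin m)) (i : Fin m) :
    0 ∈ largerSides σ i ↔ permWord σ (i + 1) < permWord σ (i + 2) :=
  Iff.rfl

theorem one_mem_largerSides (σ : Equiv.Perm (Fin m)) (i : Fin m) :
    1 ∈ largerSides σ i ↔ permWord σ (i + 1) < permWord σ i :=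
  Iff.rfl

theorem zero_mem_or_one_mem_largerSides (σ : Equiv.Perm (Fin m)) {i j : Fin m}
    (h : i.succ = j.castSucc) : 0 ∈ largerSides σ i ∨ 1 ∈ largerSides σ j := by
  have hij : (i : ℕ) + 1 = j := congrArg Fin.val h
  rw [zero_mem_largerSides, one_mem_largerSides, ← hij]
  exact (permWord_succ_ne σ i (by omega)).lt_or_gt

theorem gap_injOn_free (σ : Equiv.Perm (Fin m)) :
    Set.InjOn gap {x : Fin m × Fin 2 | x.2 ∉ largerSides σ x.1} := by
  rintro ⟨i, s⟩ hi ⟨j, t⟩ hj h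
  fin_cases s <;> fin_cases t
  · exact congrArg (·, 0) (Fin.succ_injective m h)
  · exact ((zero_mem_or_one_mem_largerSides σ h).elim hi hj).elim
  · exact ((zero_mem_or_one_mem_largerSides σ h.symm).elim hj hi).elim
  · exact congrArg (·, 1) (Fin.castSucc_injective m h)

theorem exists_free_gap_eq (σ : Equiv.Perm (Fin (n + 1))) (p : Fin (n + 2)) :
    ∃ x : Fin (n + 1) × Fin 2, x.2 ∉ largerSides σ x.1 ∧ gap x = p := by
  rcases lt_or_ge (permWord σ p) (permWord σ (p + 1)) with h | h
  · obtain ⟨i, rfl⟩ : ∃ i : Fin (n + 1), i.castSucc = p := by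
      refine ⟨p.castLT (not_le.1 fun hp => h.not_ge ?_), Fin.castSucc_castLT ..⟩
      exact (permWord_of_gt σ (Nat.lt_succ_of_le hp)).trans_le (Nat.zero_le _)
    exact ⟨(i, 1), h.not_gt, rfl⟩
  · have hp : p ≠ 0 := by
      rintro rfl
      exact h.not_gt (by simp [permWord])
    obtain ⟨i, rfl⟩ := Fin.exists_succ_eq.2 hp
    exact ⟨(i, 0), h.not_gt, rfl⟩

/-- The free sides of a nonempty permutation are its gaps: each gap lies on the free side of the
larger of its two ends. -/
noncomputable def gapEquiv (σ : Equiv.Perm (Fin (n + 1))) :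
    FreeSlot (largerSides σ) ≃ Fin (n + 2) :=
  Equiv.ofBijective (fun x => gap x.1)
    ⟨fun x y h => Subtype.ext (gap_injOn_free σ x.2 y.2 h), fun p =>
      let ⟨x, hx, h⟩ := exists_free_gap_eq σ p
      ⟨⟨x, hx⟩, h⟩⟩

theorem largerSides_eq_empty {σ : Equiv.Perm (Fin (m + 1))} {i : Fin (m + 1)}
    (hi : σ i = Fin.last m) : largerSides σ i = ∅ := by
  refine Set.eq_empty_of_forall_notMem fun s hs => ?_
  rw [largerSides, Set.mem_ofPred_eq, permWord_succ, hi] at hs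
  exact hs.not_ge (permWord_le σ _)

theorem mem_largerSides_insertMax_succAbove (τ : Equiv.Perm (Fin m)) (p : Fin (m + 1)) (j : Fin m)
    (s : Fin 2) :
    s ∈ largerSides (insertMax τ p) (p.succAbove j) ↔ s ∈ largerSides τ j ∨ gap (j, s) = p := by
  have hlt : permWord τ (j + 1) < m + 1 := Nat.lt_succ_of_le (permWord_le τ _)
  revert s
  rw [Fin.forall_fin_two]
  simp only [zero_mem_largerSides, one_mem_largerSides, permWord_insertMax_succAbove,
    permWord_insertMax_right, permWord_insertMax_left]
  constructor
  · change _ ↔ _ ∨ j.succ = p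
    split_ifs with h <;> simp [h, hlt]
  · change _ ↔ _ ∨ j.castSucc = p
    split_ifs with h <;> simp [h, hlt]

theorem largerSides_insertMax (τ : Equiv.Perm (Fin m)) (x : FreeSlot (largerSides τ)) :
    largerSides (insertMax τ (gap x.1)) =
      (gap x.1).insertNth (α := fun _ => Set (Fin 2)) ∅ (fillSlot (largerSides τ) x.1) := by
  rw [Fin.eq_insertNth_iff]
  refine ⟨largerSides_eq_empty (insertPoint_self ..), funext fun j => Set.ext fun s => ?_⟩
  rw [Fin.removeNth, mem_largerSides_insertMax_succAbove]
  -- The other end of the gap of `x` already has a larger neighbour across it.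
  exact or_congr_right' fun hs => ⟨fun h => gap_injOn_free τ hs x.2 h, congrArg gap⟩

/-- Permutations grow by inserting a new maximum. -/
noncomputable def permGrowth : SlotGrowth (fun n => Equiv.Perm (Fin (n + 1))) largerSides where
  unique_zero := inferInstanceAs (Unique (Equiv.Perm (Fin 1)))
  slots_zero _ := funext fun _ => largerSides_eq_empty (Subsingleton.elim (α := Fin 1) _ _)
  grow n := ((Equiv.sigmaCongrRight gapEquiv).trans (Equiv.sigmaEquivProd _ _)).trans
    (Equiv.ofBijective _ (insertMax_bijective (n + 1)))
  slots_grow _ x := ⟨gap x.2.1, largerSides_insertMax x.1 x.2⟩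

theorem noDoubleFall_iff (σ : Equiv.Perm (Fin m)) :
    NoDoubleFall σ ↔ ∀ i, 1 ∈ largerSides σ i → 0 ∈ largerSides σ i := by
  have hletter (i : Fin m) : ¬(permWord σ (i + 1) < permWord σ i ∧
      permWord σ (i + 2) < permWord σ (i + 1)) ↔ 1 ∈ largerSides σ i → 0 ∈ largerSides σ i := by
    have hne := permWord_succ_ne σ i (j := i + 2) (by omega)
    rw [zero_mem_largerSides, one_mem_largerSides]
    omega
  simp only [← hletter, NoDoubleFall, Finset.mem_Icc]
  refine ⟨fun h i => h (i + 1) (by omega), fun h i hi => ?_⟩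
  obtain ⟨j, rfl⟩ := Nat.exists_eq_add_of_le' hi.1
  exact h ⟨j, hi.2⟩

open scoped Classical in
theorem desCount_eq_card (σ : Equiv.Perm (Fin m)) :
    desCount σ = Finset.card {i | 1 ∈ largerSides σ i} := by
  rw [desCount, ← Finset.card_map Fin.valEmbedding]
  congr 1
  ext c
  simp only [one_mem_largerSides, Finset.mem_filter, Finset.mem_Icc, Finset.mem_map,
    Finset.mem_univ, true_and, Fin.valEmbedding_apply]
  constructor
  · rintro ⟨hc, hdes⟩
    exact ⟨⟨c, by omega⟩, hdes, rfl⟩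
  · rintro ⟨i, hdes, rfl⟩
    have hi : (i : ℕ) ≠ 0 := fun h => by simp [h, permWord_zero] at hdes
    exact ⟨by omega, hdes⟩

end Permutations

/-- The number of left-aligned rook placements on `2δ_n` having exactly
`n - 2k` blocks with exactly one rook equals the number of permutations of
`{1, …, n+1}` with exactly `k` descents such that every descent is a peak
(i.e. with no double falls). -/
theorem left_aligned_count_eq_gamma (n k : ℕ) (hk : 2 * k ≤ n) :
    Nat.card {R : RookPlacement n // LeftAligned R ∧ bor R = n - 2 * k} =
      Nat.card {σ : Equiv.Perm (Fin (n + 1)) // desCount σ = k ∧ NoDoubleFall σ} := by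
  classical
  obtain ⟨Φ, hΦ⟩ := rookGrowth.exists_equiv permGrowth n
  refine Nat.card_congr (Φ.subtypeEquiv fun R => ?_)
  obtain ⟨e, he⟩ := hΦ R
  have haligned : LeftAligned R ↔ NoDoubleFall (Φ R) := by
    rw [leftAligned_iff, noDoubleFall_iff, he]
    exact e.forall_congr_right (q := fun i => 1 ∈ largerSides (Φ R) i → 0 ∈ largerSides (Φ R) i)
  have hdes : desCount (Φ R) = Finset.card {i | 1 ∈ filledColumns R i} := by
    rw [desCount_eq_card, he]
    exact (Finset.card_equiv e (by simp)).symm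
  rw [← haligned, hdes, and_comm]
  refine and_congr_left fun hR => ?_
  have := hR.bor_add_two_mul
  omega
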